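/- Let p be a prime and R a commutative ring of characteristic p. Let H ∈ R[X] be a polynomial whose second formal derivative vanishes, and let D : R[X] → R[X] be the R-linear map D(f) = H · f′ (formal derivative). Then the p-fold composite of D satisfies D^p(f) = (H′)^{p−1} · H · f′ for every f ∈ R[X]; equivalently, D^p = (H′)^{p−1} · D as R-linear endomorphisms of R[X]. -/

import Mathlib

open Polynomial

/-!
In characteristic `p` the middle binomial coefficients of the Leibniz rule for `D ^ p` vanish, so
`D ^ p` is again a derivation, and `D ^ p = (H') ^ (p - 1) • D` is an equality of derivations. It
therefore suffices to check it on generators `x` with `x'' = 0`, such as the variable `X`. There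
`D (D x) = H' * D x` and `D H' = 0`, so each further application of `D` contributes a factor `H'`.
-/

section Leibniz

open Finset

variable {R A : Type*} [CommSemiring R] [CommSemiring A] [Algebra R A] (D : Derivation R A A)

theorem derivation_iterate_mul (n : ℕ) (a b : A) :
    D^[n] (a * b) =
      ∑ ij ∈ antidiagonal n, n.choose ij.1 • (D^[ij.1] a * D^[ij.2] b) := by
  induction n with
  | zero => simp
  | succ n ih =>
    rw [sum_antidiagonal_choose_succ_nsmul (fun i j ↦ D^[i] a * D^[j] b) n,
      Function.iterate_succ_apply', ih, map_sum, ← sum_add_distrib]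
    refine sum_congr rfl fun ij hij ↦ ?_
    have hsymm : n.choose ij.2 = n.choose ij.1 :=
      (Nat.choose_symm_of_eq_add (HasAntidiagonal.mem_antidiagonal.mp hij).symm).symm
    simp only [map_nsmul, Derivation.leibniz, smul_eq_mul, Function.iterate_succ_apply', hsymm]
    rw [← smul_add, mul_comm (D^[ij.2] b)]

theorem derivation_iterate_mul_of_charP (p : ℕ) [Fact p.Prime] [CharP A p] (a b : A) :
    D^[p] (a * b) = a * D^[p] b + b * D^[p] a := by
  have hp : p.Prime := Fact.out
  have middle_eq_zero : ∀ ij ∈ antidiagonal p, ij ≠ (0, p) ∧ ij ≠ (p, 0) →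
      p.choose ij.1 • (D^[ij.1] a * D^[ij.2] b) = 0 := by
    rintro ⟨i, j⟩ hij ⟨hi, hj⟩
    simp only [HasAntidiagonal.mem_antidiagonal, ne_eq, Prod.mk.injEq] at hij hi hj
    have hdvd : p ∣ p.choose i := hp.dvd_choose_self (by lia) (by lia)
    rw [nsmul_eq_mul, (CharP.cast_eq_zero_iff A p _).mpr hdvd, zero_mul]
  rw [derivation_iterate_mul, sum_eq_add_of_mem (0, p) (p, 0) (by simp) (by simp)
    (by simp [hp.ne_zero.symm]) middle_eq_zero]
  simp [mul_comm b]

variable {D} in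
theorem derivation_iterate_eq_pow_mul {c x : A} (hc : D c = 0) (hx : D x = c * x) (n : ℕ) :
    D^[n] x = c ^ n * x := by
  induction n with
  | zero => simp
  | succ n ih =>
    rw [Function.iterate_succ_apply', ih, Derivation.leibniz, Derivation.leibniz_pow, hc, hx]
    simp [pow_succ, mul_assoc]

end Leibniz

section PowChar

variable {R A : Type*} [CommSemiring R] [CommRing A] [Algebra R A]

/-- The `p`-th power of a derivation of an algebra of prime characteristic `p`, as a derivation
(the `p`-operation of the restricted Lie algebra of derivations). -/
def derivationPowChar (p : ℕ) [Fact p.Prime] [CharP A p] (D : Derivation R A A) :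
    Derivation R A A :=
  Derivation.mk' ((D : Module.End R A) ^ p) fun a b ↦ by
    simpa only [Module.End.pow_apply] using! derivation_iterate_mul_of_charP D p a b

theorem derivationPowChar_apply (p : ℕ) [Fact p.Prime] [CharP A p] (D : Derivation R A A) (a : A) :
    derivationPowChar p D a = D^[p] a :=
  Module.End.pow_apply (D : Module.End R A) p a

theorem derivationPowChar_eq_smul_of_adjoin_eq_top (p : ℕ) [Fact p.Prime] [CharP A p]
    {D : Derivation R A A} {s : Set A} (hs : Algebra.adjoin R s = ⊤) {c : A} (hc : D c = 0)
    (hD : ∀ x ∈ s, D (D x) = c * D x) :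
    derivationPowChar p D = c ^ (p - 1) • D := by
  refine Derivation.ext_of_adjoin_eq_top s hs fun x hx ↦ ?_
  calc derivationPowChar p D x = D^[p - 1] (D x) := by
        rw [derivationPowChar_apply, ← Function.iterate_succ_apply,
          Nat.succ_eq_add_one, Nat.sub_add_cancel (Fact.out : p.Prime).one_le]
    _ = c ^ (p - 1) * D x := derivation_iterate_eq_pow_mul hc (hD x hx) (p - 1)

end PowChar

theorem stmt_0_general (p : ℕ) (hp : p.Prime) {R A : Type*} [CommSemiring R] [CommRing A]
    [Algebra R A] [CharP A p] (d : Derivation R A A) {s : Set A} (hs : Algebra.adjoin R s = ⊤)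
    (hds : ∀ x ∈ s, d (d x) = 0) (H : A) (hH : d (d H) = 0) (f : A) :
    (fun g : A => H * d g)^[p] f = d H ^ (p - 1) * (H * d f) := by
  have : Fact p.Prime := ⟨hp⟩
  have dH_constant : (H • d) (d H) = 0 := by simp [hH]
  have eigen : ∀ x ∈ s, (H • d) ((H • d) x) = d H * (H • d) x := fun x hx ↦ by
    simp only [Derivation.smul_apply, smul_eq_mul, Derivation.leibniz, hds x hx]
    ring
  have pow_eq : derivationPowChar p (H • d) = d H ^ (p - 1) • H • d :=
    derivationPowChar_eq_smul_of_adjoin_eq_top p hs dH_constant eigen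
  exact (derivationPowChar_apply p (H • d) f).symm.trans (DFunLike.congr_fun pow_eq f)

/-- Let `p` be a prime and `R` a commutative ring of characteristic `p`.  Let `H ∈ R[X]`
be a polynomial whose second formal derivative vanishes, and let `D : R[X] → R[X]` be the
`R`-linear map `D f = H * f'`.  Then `D^p f = (H')^(p-1) * H * f'` for every `f`. -/
theorem stmt_0 (p : ℕ) (hp : p.Prime) (R : Type*) [CommRing R] [CharP R p]
    (H : R[X]) (hH : derivative (derivative H) = 0) (f : R[X]) :
    (fun g : R[X] => H * derivative g)^[p] f
      = derivative H ^ (p - 1) * (H * derivative f) := by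
  simpa only [derivative'_apply] using
    stmt_0_general p hp derivative' adjoin_X (by simp) H hH f
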